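/- Let α ≥ 3 be odd, let c = (α+2)² − (α+2) + 2, and let S be a binary matrix with pairwise distinct rows that contains the all-zero vector as a row, has no two identical columns and no inessential column, and in which every pairwise row Hamming distance lies in {α, α+1, α+2}. Let n_ω denote the number of rows of weight ω, and assume n_α < c, n_{α+1} ≥ c, and n_{α+2} ≥ c. Then the minimum size of a distinguishing set for S equals n_{α+1} + 1. -/

import Mathlib

/-!
Put `α = 2s - 1` with `s ≥ 2` and identify rows with their supports `W i`. Let `A`, `B`, `C` be
the sets of rows of weight `2s - 1`, `2s`, `2s + 1`. Parity turns the distance condition into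
exact intersection sizes inside `A`, `B`, `C` and between `A` and `C`, and into two possible
values between `B` and the others.

A large family of equal-sized sets with constant pairwise intersection is a sunflower
(`exists_kernel`, a case of Deza's theorem). It follows from `degree_mul_le`: a point in `d` of the
sets and outside `e` of them satisfies `d * e ≤ δ * (d + e)`, so it lies in almost all or
almost none of the sets. Hence `B` is a sunflower with kernel `Q`, `|Q| = s`, and `C` is a sunflower
with kernel of size `s + 1`; comparing the two, the latter is `Q ∪ {x}`. Distances at least `3`
show that a column with a single `1` is inessential, so every column of a row occurs in another
row. This forces the rigid picture recorded in `Config`: `x` lies in exactly the rows of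
`A ∪ C`; the remainders `T j = W j \ (Q ∪ {x})` for `j ∈ A ∪ C` are pairwise disjoint,
of size `s - 1` on `A` and `s` on `C`; they cover the same columns as the disjoint petals
`P i = W i \ Q`, `i ∈ B`, of size `s`; and `|A| ≤ s`.

Upper bound (`Config.exists_distinguishing`): after dropping one row of `A`, Hall's theorem matches
the remainders `T j` injectively with petals `P i` that they meet. One column from each petal,
taken in the matched remainder where there is one, together with `x`, is distinguishing.

Lower bound (`Config.le_card`): a distinguishing `K` meets all petals but at most one, and has a
column in `Q` if it misses one. If `|K| ≤ |B|` this accounts for all of `K`, so `x ∉ K` and each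
petal contains at most one column of `K`. Then every `T j` with `j ∈ C` must contain two
columns of `K`, so `2|C| ≤ |B|`, while counting columns gives `|B| ≤ |C| + s - 1`.
-/

/-- A set `K` of column indices is a distinguishing set for the matrix `S`
if every pair of distinct rows differs in some column of `K`. -/
def Distinguishes {n : ℕ} {κ α : Type*} (S : Fin n → κ → α) (K : Finset κ) : Prop :=
  ∀ i j : Fin n, i ≠ j → ∃ c ∈ K, S i c ≠ S j c

/-- The support of row `i`: the set of columns where the binary matrix `S` has a 1. -/
def rowSupport {n d : ℕ} (S : Fin n → Fin d → Bool) (i : Fin n) : Finset (Fin d) :=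
  Finset.univ.filter fun c => S i c = true

/-- A column `j` of a binary matrix is inessential if (1) it exactly distinguishes
some row `i` from all other rows, and (2) the rows remain pairwise distinct after
deleting column `j`. -/
def Inessential {n d : ℕ} (S : Fin n → Fin d → Bool) (j : Fin d) : Prop :=
  (∃ i : Fin n, (∀ l, l ≠ i → S i j ≠ S l j) ∧ ∀ l l', l ≠ i → l' ≠ i → S l j = S l' j) ∧
  (∀ i i' : Fin n, i ≠ i' → ∃ c : Fin d, c ≠ j ∧ S i c ≠ S i' c)

open Finset

/-! ### Sunflowers -/

lemma exists_disjoint_petal {ι V : Type*} [DecidableEq ι] [DecidableEq V] (I : Finset ι)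
    (P : ι → Finset V) (hP : ∀ i ∈ I, ∀ j ∈ I, i ≠ j → Disjoint (P i) (P j))
    (T : Finset V) (hT : T.card < I.card) : ∃ i ∈ I, Disjoint (P i) T := by
  by_contra! h
  have h' : ∀ i ∈ I, 1 ≤ (P i ∩ T).card := by
    intro i hi
    have := h i hi
    rw [Finset.not_disjoint_iff_nonempty_inter] at this
    exact this.card_pos
  have h1 : (I.biUnion fun i => P i ∩ T).card = ∑ i ∈ I, (P i ∩ T).card := by
    apply Finset.card_biUnion
    intro i hi j hj hij
    exact (hP i hi j hj hij).mono inter_subset_left inter_subset_left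
  have h2 : (I.biUnion fun i => P i ∩ T).card ≤ T.card :=
    Finset.card_le_card (Finset.biUnion_subset.2 fun i _ => inter_subset_right)
  have h3 : ∑ i ∈ I, 1 ≤ ∑ i ∈ I, (P i ∩ T).card := Finset.sum_le_sum h'
  simp only [sum_const, smul_eq_mul, mul_one] at h3
  omega

/-- In a family of sets of size `l + δ` with pairwise intersections of size `l`, the characteristic
vectors form a regular simplex. The squared distance between the barycentres of the sets
containing `x` and of those avoiding `x` is `δ * (1 / d + 1 / e)`, and the coordinate `x`
contributes `1` to it. The proof clears denominators. -/
lemma degree_mul_le {ι V : Type*} [DecidableEq ι] [DecidableEq V] [Fintype V]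
    (I : Finset ι) (F : ι → Finset V) (l δ : ℕ) (hk : ∀ i ∈ I, (F i).card = l + δ)
    (hl : ∀ i ∈ I, ∀ j ∈ I, i ≠ j → (F i ∩ F j).card = l) (x : V) :
    (I.filter fun i => x ∈ F i).card * (I.filter fun i => x ∉ F i).card ≤
      δ * ((I.filter fun i => x ∈ F i).card + (I.filter fun i => x ∉ F i).card) := by
  set d := (I.filter fun i => x ∈ F i).card with hd
  set e := (I.filter fun i => x ∉ F i).card with he
  let a : ι → ℤ := fun i => if x ∈ F i then (e : ℤ) else -(d : ℤ)
  have hsum (u v : ℤ) : ∑ i ∈ I, (if x ∈ F i then u else v) = d * u + e * v := by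
    rw [Finset.sum_ite]
    simp [hd, he]
  have ha : ∑ i ∈ I, a i = 0 := by
    simp only [a]; rw [hsum]; ring
  have ha2 : ∑ i ∈ I, a i ^ 2 = d * (e : ℤ) ^ 2 + e * (d : ℤ) ^ 2 := by
    rw [← hsum]
    apply Finset.sum_congr rfl
    intro i _
    simp only [a]
    split_ifs <;> ring
  have hinter : ∀ i ∈ I, ∀ j ∈ I, ((F i ∩ F j).card : ℤ) = l + if i = j then (δ : ℤ) else 0 := by
    intro i hi j hj
    split_ifs with h
    · subst h
      simp [hk i hi]
    · simp [hl i hi j hj h]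
  have hsq : ∑ y : V, (∑ i ∈ I, if y ∈ F i then a i else 0) ^ 2 = δ * ∑ i ∈ I, a i ^ 2 := by
    calc ∑ y : V, (∑ i ∈ I, if y ∈ F i then a i else 0) ^ 2
        = ∑ y : V, ∑ i ∈ I, ∑ j ∈ I, if y ∈ F i ∩ F j then a i * a j else 0 := by
          apply Finset.sum_congr rfl
          intro y _
          rw [sq, Finset.sum_mul_sum]
          refine Finset.sum_congr rfl fun i _ => Finset.sum_congr rfl fun j _ => ?_
          by_cases h1 : y ∈ F i <;> by_cases h2 : y ∈ F j <;> simp [h1, h2]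
      _ = ∑ i ∈ I, ∑ j ∈ I, a i * a j * (F i ∩ F j).card := by
          rw [Finset.sum_comm]
          refine Finset.sum_congr rfl fun i _ => ?_
          rw [Finset.sum_comm]
          refine Finset.sum_congr rfl fun j _ => ?_
          rw [Finset.sum_ite_mem]
          simp [mul_comm]
      _ = ∑ i ∈ I, ∑ j ∈ I, (a i * a j * l + if i = j then a i * a j * δ else 0) := by
          refine Finset.sum_congr rfl fun i hi => Finset.sum_congr rfl fun j hj => ?_
          rw [hinter i hi j hj]
          split_ifs <;> ring
      _ = (∑ i ∈ I, a i) * (∑ i ∈ I, a i) * l + ∑ i ∈ I, a i * a i * δ := by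
          rw [Finset.sum_mul_sum, Finset.sum_mul, ← Finset.sum_add_distrib]
          refine Finset.sum_congr rfl fun i hi => ?_
          rw [Finset.sum_add_distrib, Finset.sum_ite_eq, if_pos hi, Finset.sum_mul]
      _ = δ * ∑ i ∈ I, a i ^ 2 := by
          rw [ha, Finset.mul_sum]
          simp only [zero_mul, zero_add]
          exact Finset.sum_congr rfl fun i _ => by ring
  have hx : (∑ i ∈ I, if x ∈ F i then a i else 0) = d * e := by
    have : ∀ i ∈ I, (if x ∈ F i then a i else 0) = if x ∈ F i then (e : ℤ) else 0 := by
      intro i _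
      simp only [a]
      split_ifs <;> rfl
    rw [Finset.sum_congr rfl this, hsum]; ring
  have hle : ((d : ℤ) * e) ^ 2 ≤ δ * (d * (e : ℤ) ^ 2 + e * (d : ℤ) ^ 2) := by
    rw [← ha2, ← hsq, ← hx]
    exact Finset.single_le_sum (f := fun y => (∑ i ∈ I, if y ∈ F i then a i else 0) ^ 2)
      (fun y _ => sq_nonneg _) (Finset.mem_univ x)
  have hle' : (d * e) * (d * e) ≤ (d * e) * (δ * (d + e)) := by
    zify
    nlinarith
  rcases Nat.eq_zero_or_pos (d * e) with h0 | h0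
  · rw [h0]; exact Nat.zero_le _
  · exact Nat.le_of_mul_le_mul_left hle' h0

/-- A case of Deza's theorem: a large family of sets of size `l + δ` with all pairwise intersections
of size `l` is a sunflower. The kernel consists of the points lying in almost all the sets; by
`degree_mul_le` every other point lies in at most `δ` of them. -/
lemma exists_kernel {ι V : Type*} [DecidableEq ι] [DecidableEq V] [Fintype V]
    (I : Finset ι) (F : ι → Finset V) (l δ : ℕ) (hδ : 1 ≤ δ) (hlδ : l ≤ δ + 1)
    (hk : ∀ i ∈ I, (F i).card = l + δ)
    (hl : ∀ i ∈ I, ∀ j ∈ I, i ≠ j → (F i ∩ F j).card = l)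
    (hI : 4 * δ ^ 2 + 2 * δ + 2 ≤ I.card) :
    ∃ M : Finset V, M.card = l ∧ (∀ i ∈ I, M ⊆ F i) ∧
      ∀ i ∈ I, ∀ j ∈ I, i ≠ j → F i ∩ F j = M := by
  have hdeg : ∀ x, (I.filter fun i => x ∈ F i).card ≤ δ ∨
      (I.filter fun i => x ∉ F i).card ≤ δ := by
    intro x
    by_contra! h
    have h1 := degree_mul_le I F l δ hk hl x
    have h2 := Finset.card_filter_add_card_filter_not (s := I) (fun i => x ∈ F i)
    obtain ⟨ha, hb⟩ := h
    obtain ⟨a, ha⟩ := Nat.exists_eq_add_of_lt ha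
    obtain ⟨b, hb⟩ := Nat.exists_eq_add_of_lt hb
    rw [ha, hb] at h1 h2
    nlinarith [Nat.zero_le (a * b)]
  let M : Finset V := univ.filter fun x => (I.filter fun i => x ∉ F i).card ≤ δ
  -- `Z` and the sets behaving atypically at some point of `F i` are too few to exhaust `I`.
  have hgood : ∀ i ∈ I, ∀ Z : Finset ι, Z.card ≤ δ →
      ∃ j ∈ I, j ≠ i ∧ j ∉ Z ∧ F i ∩ F j = F i ∩ M := by
    intro i hi Z hZ
    let bad : V → Finset ι := fun y =>
      if y ∈ M then I.filter fun i => y ∉ F i else I.filter fun i => y ∈ F i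
    have hbad : ∀ y ∈ F i, (bad y).card ≤ δ := by
      intro y _
      simp only [bad]
      split_ifs with h
      · simpa [M] using h
      · have h' : ¬ (I.filter fun i => y ∉ F i).card ≤ δ := by simpa [M] using h
        exact (hdeg y).resolve_right h'
    have h1 : ((F i).biUnion bad).card ≤ (F i).card * δ := Finset.card_biUnion_le_card_mul _ _ _ hbad
    have h2 : (insert i (Z ∪ (F i).biUnion bad)).card < I.card := by
      have h3 := Finset.card_insert_le i (Z ∪ (F i).biUnion bad)
      have h4 := Finset.card_union_le Z ((F i).biUnion bad)
      rw [hk i hi] at h1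
      nlinarith
    obtain ⟨j, hj, hjn⟩ := Finset.exists_mem_notMem_of_card_lt_card h2
    simp only [mem_insert, mem_union, mem_biUnion, not_or, not_exists, not_and] at hjn
    refine ⟨j, hj, hjn.1, hjn.2.1, ?_⟩
    ext y
    simp only [mem_inter, and_congr_right_iff]
    intro hy
    have := hjn.2.2 y hy
    by_cases hyM : y ∈ M <;> simp [bad, hyM, hj] at this <;> simp [hyM, this]
  have hFM : ∀ i ∈ I, (F i ∩ M).card = l := by
    intro i hi
    obtain ⟨j, hj, hji, -, h⟩ := hgood i hi ∅ (by simp)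
    rw [← h]
    exact hl i hi j hj hji.symm
  have hMF : ∀ i ∈ I, M ⊆ F i := by
    intro i hi y hy
    obtain ⟨j, hj, -, hjZ, h⟩ := hgood i hi (I.filter fun i => y ∉ F i) (by simpa [M] using hy)
    have hyj : y ∈ F j := by simpa [hj] using hjZ
    have hsub : F i ∩ M ⊆ F j ∩ M := by
      intro z hz
      have hz' : z ∈ F i ∩ F j := h ▸ hz
      simp only [mem_inter] at hz hz' ⊢
      exact ⟨hz'.2, hz.2⟩
    have heq := Finset.eq_of_subset_of_card_le hsub (by rw [hFM i hi, hFM j hj])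
    have : y ∈ F i ∩ M := heq ▸ mem_inter.2 ⟨hyj, hy⟩
    exact (mem_inter.1 this).1
  have hM : M.card = l := by
    have : I.Nonempty := Finset.card_pos.1 (by omega)
    obtain ⟨i, hi⟩ := this
    rw [← hFM i hi, Finset.inter_eq_right.2 (hMF i hi)]
  refine ⟨M, hM, hMF, fun i hi j hj hij => ?_⟩
  exact (Finset.eq_of_subset_of_card_le (Finset.subset_inter (hMF i hi) (hMF j hj))
    (by rw [hM, hl i hi j hj hij])).symm

/-! ### The structure of the matrix -/

/-- The rigid structure of the supports `W i`: the rows of `B` form a sunflower with kernel `Q` and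
petals `W i \ Q` of size `s`; the rows of `A ∪ C` contain the additional column `x`, and their
remainders `W j \ (Q ∪ {x})` are pairwise disjoint and have the same union as the petals. The
remainders have size `s - 1` on `A` and `s` on `C`. -/
structure Config {ι V : Type*} [DecidableEq ι] [DecidableEq V] (s : ℕ) (W : ι → Finset V)
    (A B C : Finset ι) (Q : Finset V) (x : V) : Prop where
  x_notMem : x ∉ Q
  Q_sub : ∀ i ∈ B, Q ⊆ W i
  card_petal : ∀ i ∈ B, (W i \ Q).card = s
  disj_petal : ∀ i ∈ B, ∀ j ∈ B, i ≠ j → Disjoint (W i \ Q) (W j \ Q)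
  x_notMem_B : ∀ i ∈ B, x ∉ W i
  x_mem : ∀ j ∈ A ∪ C, x ∈ W j
  Q_sub_C : ∀ j ∈ C, Q ⊆ W j
  disj_T : ∀ i ∈ A ∪ C, ∀ j ∈ A ∪ C, i ≠ j →
    Disjoint (W i \ insert x Q) (W j \ insert x Q)
  card_T_A : ∀ j ∈ A, (W j \ insert x Q).card + 1 = s
  card_T_C : ∀ j ∈ C, (W j \ insert x Q).card = s
  card_A : A.card ≤ s
  T_sub : ∀ j ∈ A ∪ C, W j \ insert x Q ⊆ B.biUnion fun i => W i \ Q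
  petal_sub : ∀ i ∈ B, W i \ Q ⊆ (A ∪ C).biUnion fun j => W j \ insert x Q

/-- Intersection sizes together with `hess` (no column has a single `1`) force the structure
`Config`. Here `A`, `B`, `C` are the rows of weight `2s - 1`, `2s`, `2s + 1`. -/
lemma exists_config {ι V : Type*} [DecidableEq ι] [DecidableEq V] [Fintype V] (s : ℕ)
    (hs : 2 ≤ s) (W : ι → Finset V) (A B C : Finset ι) (i₀ : ι) (h₀ : W i₀ = ∅)
    (hcov : ∀ i, i = i₀ ∨ i ∈ A ∨ i ∈ B ∨ i ∈ C)
    (hess : ∀ i, ∀ p ∈ W i, ∃ j, j ≠ i ∧ p ∈ W j)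
    (hA : ∀ i ∈ A, (W i).card + 1 = 2 * s) (hB : ∀ i ∈ B, (W i).card = 2 * s)
    (hC : ∀ i ∈ C, (W i).card = 2 * s + 1)
    (hAA : ∀ i ∈ A, ∀ j ∈ A, i ≠ j → (W i ∩ W j).card + 1 = s)
    (hBB : ∀ i ∈ B, ∀ j ∈ B, i ≠ j → (W i ∩ W j).card = s)
    (hCC : ∀ i ∈ C, ∀ j ∈ C, i ≠ j → (W i ∩ W j).card = s + 1)
    (hAB : ∀ i ∈ A, ∀ j ∈ B, (W i ∩ W j).card ≤ s)
    (hAC : ∀ i ∈ A, ∀ j ∈ C, (W i ∩ W j).card = s)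
    (hBC : ∀ i ∈ B, ∀ j ∈ C, s ≤ (W i ∩ W j).card ∧ (W i ∩ W j).card ≤ s + 1)
    (hBcard : 4 * s ^ 2 + 2 * s + 2 ≤ B.card) (hCcard : 4 * s ^ 2 + 2 * s + 2 ≤ C.card) :
    ∃ Q x, Config s W A B C Q x := by
  obtain ⟨Q, hQ, hQB, hQi⟩ := exists_kernel B W s s (by omega) (by omega)
    (fun i hi => by rw [hB i hi]; ring) hBB hBcard
  obtain ⟨R, hR, hRC, hRi⟩ := exists_kernel C W (s + 1) s (by omega) (by omega)
    (fun i hi => by rw [hC i hi]; ring) hCC hCcard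
  have hpB : ∀ i ∈ B, ∀ j ∈ B, i ≠ j → Disjoint (W i \ Q) (W j \ Q) := by
    intro i hi j hj hij
    rw [Finset.disjoint_left]
    intro p hp hp'
    simp only [mem_sdiff] at hp hp'
    exact hp.2 (hQi i hi j hj hij ▸ mem_inter.2 ⟨hp.1, hp'.1⟩)
  have hpC : ∀ i ∈ C, ∀ j ∈ C, i ≠ j → Disjoint (W i \ R) (W j \ R) := by
    intro i hi j hj hij
    rw [Finset.disjoint_left]
    intro p hp hp'
    simp only [mem_sdiff] at hp hp'
    exact hp.2 (hRi i hi j hj hij ▸ mem_inter.2 ⟨hp.1, hp'.1⟩)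
  -- Some petal of `B` avoids `W j`, so `W j` meets the corresponding row only inside `Q`.
  have hQC : ∀ j ∈ C, Q ⊆ W j := by
    intro j hj
    obtain ⟨i, hi, hd⟩ := exists_disjoint_petal B _ hpB (W j) (by rw [hC j hj]; nlinarith)
    have h1 : W i ∩ W j ⊆ Q := by
      intro p hp
      by_contra hpQ
      simp only [mem_inter] at hp
      exact (Finset.disjoint_left.1 hd) (mem_sdiff.2 ⟨hp.1, hpQ⟩) hp.2
    have h2 := Finset.eq_of_subset_of_card_le h1 (by rw [hQ]; exact (hBC i hi j hj).1)
    rw [← h2]; exact inter_subset_right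
  have hQR : Q ⊆ R := by
    obtain ⟨i, hi, j, hj, hij⟩ := Finset.one_lt_card.1 (show 1 < C.card by omega)
    rw [← hRi i hi j hj hij]
    exact Finset.subset_inter (hQC i hi) (hQC j hj)
  obtain ⟨x, hx⟩ : ∃ x, R \ Q = {x} := by
    rw [← Finset.card_eq_one, Finset.card_sdiff_of_subset hQR]; omega
  have hxQ : x ∉ Q := by
    have : x ∈ R \ Q := by simp [hx]
    exact (mem_sdiff.1 this).2
  have hRx : R = insert x Q := by
    rw [← Finset.sdiff_union_of_subset hQR, hx]; rfl
  have hxR : x ∈ R := by simp [hRx]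
  have hAR : ∀ j ∈ A, (W j ∩ R).card = s := by
    intro j hj
    obtain ⟨i, hi, hd⟩ := exists_disjoint_petal C _ hpC (W j) (by have := hA j hj; nlinarith)
    rw [← hAC j hj i hi]
    congr 1
    ext p
    simp only [mem_inter]
    refine ⟨fun h => ⟨h.1, hRC i hi h.2⟩, fun h => ⟨h.1, ?_⟩⟩
    by_contra hpR
    exact (Finset.disjoint_left.1 hd) (mem_sdiff.2 ⟨h.2, hpR⟩) h.1
  have hACR : ∀ j ∈ A, ∀ i ∈ C, W j ∩ W i = W j ∩ R := by
    intro j hj i hi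
    exact (Finset.eq_of_subset_of_card_le (inter_subset_inter_left (hRC i hi))
      (by rw [hAR j hj, hAC j hj i hi])).symm
  have hAAR : ∀ i ∈ A, ∀ j ∈ A, i ≠ j → W i ∩ W j = W i ∩ W j ∩ R ∧ W i ∩ R ≠ W j ∩ R := by
    intro i hi j hj hij
    have h1 := hAA i hi j hj hij
    have h2 : s ≤ (W i ∩ W j ∩ R).card + 1 := by
      have h3 := Finset.card_union_add_card_inter (W i ∩ R) (W j ∩ R)
      have h4 : ((W i ∩ R) ∪ (W j ∩ R)).card ≤ R.card :=
        Finset.card_le_card (union_subset inter_subset_right inter_subset_right)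
      rw [← Finset.inter_inter_distrib_right, hAR i hi, hAR j hj] at h3
      omega
    refine ⟨(Finset.eq_of_subset_of_card_le inter_subset_left (by omega)).symm, fun h => ?_⟩
    have h5 : W i ∩ R ⊆ W i ∩ W j := by
      intro p hp
      have hp' : p ∈ W j ∩ R := h ▸ hp
      simp only [mem_inter] at hp hp' ⊢
      exact ⟨hp.1, hp'.1⟩
    have := Finset.card_le_card h5
    rw [hAR i hi] at this
    omega
  -- A column outside `R` lies in at most one row of `A ∪ C`.
  have hTd : ∀ i ∈ A ∪ C, ∀ j ∈ A ∪ C, i ≠ j → ∀ p, p ∈ W i → p ∈ W j → p ∈ R := by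
    intro i hi j hj hij p hpi hpj
    have hp : p ∈ W i ∩ W j := mem_inter.2 ⟨hpi, hpj⟩
    rcases mem_union.1 hi with hi | hi <;> rcases mem_union.1 hj with hj | hj
    · rw [(hAAR i hi j hj hij).1] at hp
      exact (mem_inter.1 hp).2
    · rw [hACR i hi j hj] at hp
      exact (mem_inter.1 hp).2
    · rw [inter_comm, hACR j hj i hi] at hp
      exact (mem_inter.1 hp).2
    · rwa [hRi i hi j hj hij] at hp
  have hTcA : ∀ j ∈ A, (W j \ R).card + 1 = s := by
    intro j hj
    have h1 := Finset.card_sdiff_add_card_inter (W j) R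
    have h2 := hAR j hj
    have h3 := hA j hj
    omega
  -- If `x ∉ W j`, then `W j` contains `Q` and meets every other row inside `R`, so a column of
  -- `W j` outside `R` lies in no other row.
  have hxA : ∀ j ∈ A, x ∈ W j := by
    intro j hj
    by_contra hxj
    have hWQ : W j ∩ R = Q := by
      apply Finset.eq_of_subset_of_card_le
      · intro p hp
        simp only [hRx, mem_inter, mem_insert] at hp
        rcases hp.2 with rfl | h
        · exact absurd hp.1 hxj
        · exact h
      · rw [hAR j hj, hQ]
    have hQj : Q ⊆ W j := hWQ ▸ inter_subset_left
    obtain ⟨t, ht⟩ : (W j \ R).Nonempty := Finset.card_pos.1 (by have := hTcA j hj; omega)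
    simp only [mem_sdiff] at ht
    obtain ⟨l, hlj, hl⟩ := hess j t ht.1
    rcases hcov l with rfl | h | h | h
    · simp [h₀] at hl
    · exact ht.2 (hTd l (mem_union_left _ h) j (mem_union_left _ hj) hlj t hl ht.1)
    · have h1 : Q = W j ∩ W l := Finset.eq_of_subset_of_card_le
        (Finset.subset_inter hQj (hQB l h)) (by rw [hQ]; exact hAB j hj l h)
      exact ht.2 (hQR (h1 ▸ mem_inter.2 ⟨ht.1, hl⟩))
    · exact ht.2 (hTd l (mem_union_right _ h) j (mem_union_left _ hj) hlj t hl ht.1)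
  have hcP : ∀ i ∈ B, (W i \ Q).card = s := by
    intro i hi
    rw [Finset.card_sdiff_of_subset (hQB i hi), hB i hi, hQ]; omega
  -- If `x ∈ W i`, then `R ⊆ W i` and the other columns of the petal lie in no other row.
  have hxB : ∀ i ∈ B, x ∉ W i := by
    intro i hi hxi
    have hRi' : R ⊆ W i := by
      rw [hRx]; exact Finset.insert_subset hxi (hQB i hi)
    obtain ⟨p, hp, hpx⟩ := Finset.exists_mem_ne (show 1 < (W i \ Q).card by rw [hcP i hi]; omega) x
    simp only [mem_sdiff] at hp
    have hpR : p ∉ R := by simp [hRx, hp.2, hpx]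
    obtain ⟨l, hlj, hl⟩ := hess i p hp.1
    rcases hcov l with rfl | h | h | h
    · simp [h₀] at hl
    · have h1 : W l ∩ R = W l ∩ W i := Finset.eq_of_subset_of_card_le
        (inter_subset_inter_left hRi') (by rw [hAR l h]; exact hAB l h i hi)
      have : p ∈ W l ∩ R := h1 ▸ mem_inter.2 ⟨hl, hp.1⟩
      exact hpR (mem_inter.1 this).2
    · exact hp.2 (hQi l h i hi hlj ▸ mem_inter.2 ⟨hl, hp.1⟩)
    · have h1 : R = W i ∩ W l := Finset.eq_of_subset_of_card_le
        (Finset.subset_inter hRi' (hRC l h)) (by rw [hR]; exact (hBC i hi l h).2)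
      exact hpR (h1 ▸ mem_inter.2 ⟨hp.1, hl⟩)
  -- Each row of `A` misses exactly one column of `R`; these columns lie in `Q` and are distinct.
  have hcA : A.card ≤ s := by
    have h1 : A.card ≤ (Q.powersetCard 1).card := by
      apply Finset.card_le_card_of_injOn (fun j => R \ W j)
      · intro j hj
        simp only [Finset.mem_coe, mem_powersetCard] at hj ⊢
        constructor
        · intro p hp
          simp only [hRx, mem_sdiff, mem_insert] at hp
          rcases hp.1 with rfl | h
          · exact absurd (hxA j hj) hp.2
          · exact h
        · have h2 := Finset.card_sdiff_add_card_inter R (W j)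
          rw [inter_comm, hAR j hj] at h2
          omega
      · intro i hi j hj hij
        by_contra hne
        apply (hAAR i hi j hj hne).2
        have h1 : R \ (R \ W i) = R \ (R \ W j) := by
          simp only at hij
          rw [hij]
        simpa [Finset.sdiff_sdiff_self_left, inter_comm] using h1
    simpa [hQ] using h1
  refine ⟨Q, x, hxQ, hQB, hcP, hpB, hxB, ?_, hQC, ?_, ?_, ?_, hcA, ?_, ?_⟩ <;> try rw [← hRx]
  · intro j hj
    rcases mem_union.1 hj with hj | hj
    · exact hxA j hj
    · exact hRC j hj hxR
  · intro i hi j hj hij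
    rw [Finset.disjoint_left]
    intro p hp hp'
    simp only [mem_sdiff] at hp hp'
    exact hp.2 (hTd i hi j hj hij p hp.1 hp'.1)
  · exact hTcA
  · intro j hj
    rw [Finset.card_sdiff_of_subset (hRC j hj), hC j hj, hR]; omega
  · intro j hj p hp
    simp only [mem_sdiff] at hp
    obtain ⟨l, hlj, hl⟩ := hess j p hp.1
    rcases hcov l with rfl | h | h | h
    · simp [h₀] at hl
    · exact absurd (hTd l (mem_union_left _ h) j hj hlj p hl hp.1) hp.2
    · exact mem_biUnion.2 ⟨l, h, mem_sdiff.2 ⟨hl, fun h => hp.2 (hQR h)⟩⟩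
    · exact absurd (hTd l (mem_union_right _ h) j hj hlj p hl hp.1) hp.2
  · intro i hi p hp
    simp only [mem_sdiff] at hp
    have hpR : p ∉ R := by
      rw [hRx, mem_insert, not_or]
      exact ⟨fun h => hxB i hi (h ▸ hp.1), hp.2⟩
    obtain ⟨l, hlj, hl⟩ := hess i p hp.1
    rcases hcov l with rfl | h | h | h
    · simp [h₀] at hl
    · exact mem_biUnion.2 ⟨l, mem_union_left _ h, mem_sdiff.2 ⟨hl, hpR⟩⟩
    · exact absurd (hQi l h i hi hlj ▸ mem_inter.2 ⟨hl, hp.1⟩) hp.2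
    · exact mem_biUnion.2 ⟨l, mem_union_right _ h, mem_sdiff.2 ⟨hl, hpR⟩⟩

/-! ### The upper bound -/

/-- Hall's condition holds by counting columns: a set `X` of rows in `D` has remainders of total
size greater than `s * (|X| - 1)`, and these are covered by the petals they meet, of size `s`. -/
lemma Config.exists_matching {ι V : Type*} [DecidableEq ι] [DecidableEq V] {s : ℕ}
    {W : ι → Finset V} {A B C : Finset ι} {Q : Finset V} {x : V}
    (h : Config s W A B C Q x) (D : Finset ι) (hD : D ⊆ A ∪ C)
    (hDA : (D ∩ A).card < s) :
    ∃ f : D → ι, Function.Injective f ∧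
      ∀ j : D, f j ∈ B ∧ ∃ p, p ∈ W j \ insert x Q ∧ p ∈ W (f j) \ Q := by
  let t : D → Finset ι := fun j =>
    B.filter fun i => ∃ p, p ∈ W j \ insert x Q ∧ p ∈ W i \ Q
  suffices hall : ∀ X : Finset D, X.card ≤ (X.biUnion t).card by
    obtain ⟨f, hf, hft⟩ := (Finset.all_card_le_biUnion_card_iff_exists_injective t).1 hall
    exact ⟨f, hf, fun j => by simpa [t] using hft j⟩
  intro X
  have hcard : (X.biUnion fun j : D => W j \ insert x Q).card =
      ∑ j ∈ X, (W j \ insert x Q).card := by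
    apply Finset.card_biUnion
    intro i _ j _ hij
    exact h.disj_T i (hD i.2) j (hD j.2) (fun e => hij (Subtype.ext e))
  have hsub : (X.biUnion fun j : D => W j \ insert x Q) ⊆
      (X.biUnion t).biUnion fun i => W i \ Q := by
    intro p hp
    obtain ⟨j, hj, hp⟩ := mem_biUnion.1 hp
    obtain ⟨i, hi, hpi⟩ := mem_biUnion.1 (h.T_sub j (hD j.2) hp)
    exact mem_biUnion.2 ⟨i, mem_biUnion.2 ⟨j, hj, mem_filter.2 ⟨hi, p, hp, hpi⟩⟩, hpi⟩
  have hup : ((X.biUnion t).biUnion fun i => W i \ Q).card ≤ (X.biUnion t).card * s := by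
    apply Finset.card_biUnion_le_card_mul
    intro i hi
    obtain ⟨j, _, hi⟩ := mem_biUnion.1 hi
    exact (h.card_petal i (mem_filter.1 hi).1).le
  have hlow : X.card * s ≤ (∑ j ∈ X, (W j \ insert x Q).card) +
      (X.filter fun j : D => (j : ι) ∈ A).card := by
    rw [Finset.card_filter, ← Finset.sum_add_distrib, ← smul_eq_mul]
    apply Finset.card_nsmul_le_sum
    intro j _
    split_ifs with hjA
    · exact (h.card_T_A j hjA).ge
    · exact (h.card_T_C j ((mem_union.1 (hD j.2)).resolve_left hjA)).ge
  have hfew : (X.filter fun j : D => (j : ι) ∈ A).card ≤ (D ∩ A).card := by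
    apply Finset.card_le_card_of_injOn (fun j : D => (j : ι))
    · intro j hj
      simp only [coe_filter, Set.mem_ofPred_eq] at hj
      simp [hj.2]
    · exact Subtype.val_injective.injOn
  have h1 := Finset.card_le_card hsub
  rw [hcard] at h1
  by_contra! hlt
  nlinarith

lemma Config.exists_distinguishing {ι V : Type*} [DecidableEq ι] [DecidableEq V] {s : ℕ}
    {W : ι → Finset V} {A B C : Finset ι} {Q : Finset V} {x : V}
    (h : Config s W A B C Q x) (hs : 2 ≤ s) (i₀ : ι) (h₀ : W i₀ = ∅)
    (hcov : ∀ i, i = i₀ ∨ i ∈ A ∨ i ∈ B ∨ i ∈ C) :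
    ∃ K : Finset V, K.card = B.card + 1 ∧
      ∀ i j, i ≠ j → ∃ c ∈ K, ¬ (c ∈ W i ↔ c ∈ W j) := by
  -- One row of `A` (if there is any) is left unmatched: its remainder may be missed by `K`.
  obtain ⟨D, hD, hDA, hDone⟩ : ∃ D ⊆ A ∪ C, (D ∩ A).card < s ∧
      ∀ i ∈ A ∪ C, ∀ j ∈ A ∪ C, i ≠ j → i ∈ D ∨ j ∈ D := by
    rcases A.eq_empty_or_nonempty with rfl | ⟨a, ha⟩
    · exact ⟨_, Finset.Subset.refl _, by simp; omega, fun i hi _ _ _ => Or.inl hi⟩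
    · refine ⟨(A ∪ C).erase a, Finset.erase_subset _ _, ?_, ?_⟩
      · refine lt_of_lt_of_le (Finset.card_lt_card (t := A) ?_) h.card_A
        refine (Finset.ssubset_iff_of_subset inter_subset_right).2 ⟨a, ha, by simp⟩
      · intro i hi j hj hij
        by_cases hia : i = a
        · exact Or.inr (mem_erase.2 ⟨fun e => hij (hia.trans e.symm), hj⟩)
        · exact Or.inl (mem_erase.2 ⟨hia, hi⟩)
  obtain ⟨f, hf, hfB⟩ := h.exists_matching D hD hDA
  have hpick : ∀ i, ∃ p, i ∈ B → p ∈ W i \ Q ∧ ∀ j : D, f j = i → p ∈ W j \ insert x Q := by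
    intro i
    by_cases hi : i ∈ B
    · by_cases hj : ∃ j, f j = i
      · obtain ⟨j, rfl⟩ := hj
        obtain ⟨-, p, hp, hp'⟩ := hfB j
        exact ⟨p, fun _ => ⟨hp', fun j' e => hf e ▸ hp⟩⟩
      · obtain ⟨p, hp⟩ : (W i \ Q).Nonempty :=
          Finset.card_pos.1 (by rw [h.card_petal i hi]; omega)
        exact ⟨p, fun _ => ⟨hp, fun j e => absurd ⟨j, e⟩ hj⟩⟩
    · exact ⟨x, fun h => absurd h hi⟩
  choose g hg using hpick
  have hginj : Set.InjOn g B := by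
    intro i hi j hj hij
    by_contra hne
    exact Finset.disjoint_left.1 (h.disj_petal i hi j hj hne) (hg i hi).1 (hij ▸ (hg j hj).1)
  refine ⟨insert x (B.image g), ?_, ?_⟩
  · rw [Finset.card_insert_of_notMem, Finset.card_image_of_injOn hginj]
    intro hx
    obtain ⟨i, hi, rfl⟩ := mem_image.1 hx
    exact h.x_notMem_B i hi (mem_sdiff.1 (hg i hi).1).1
  have hgK : ∀ i ∈ B, g i ∈ insert x (B.image g) := fun i hi =>
    mem_insert_of_mem (mem_image_of_mem g hi)
  have hcov' : ∀ i, i = i₀ ∨ i ∈ B ∨ i ∈ A ∪ C := by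
    intro i
    rcases hcov i with h | h | h | h <;> simp [h]
  have key : ∀ j ∈ D, ∀ i ∈ A ∪ C, i ≠ j →
      ∃ c ∈ insert x (B.image g), c ∈ W j ∧ c ∉ W i := by
    intro j hj i hi hij
    have h1 := (hg _ (hfB ⟨j, hj⟩).1).2 ⟨j, hj⟩ rfl
    refine ⟨_, hgK _ (hfB ⟨j, hj⟩).1, (mem_sdiff.1 h1).1, fun h2 => ?_⟩
    exact Finset.disjoint_left.1 (h.disj_T j (hD hj) i hi hij.symm) h1
      (mem_sdiff.2 ⟨h2, (mem_sdiff.1 h1).2⟩)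
  intro i j hij
  rcases hcov' i with hi | hi | hi <;> rcases hcov' j with hj | hj | hj
  · exact absurd (hi.trans hj.symm) hij
  · exact ⟨g j, hgK j hj, by simp [hi, h₀, (mem_sdiff.1 (hg j hj).1).1]⟩
  · exact ⟨x, mem_insert_self _ _, by simp [hi, h₀, h.x_mem j hj]⟩
  · exact ⟨g i, hgK i hi, by simp [hj, h₀, (mem_sdiff.1 (hg i hi).1).1]⟩
  · refine ⟨g i, hgK i hi, fun e => ?_⟩
    have h1 := (hg i hi).1
    exact Finset.disjoint_left.1 (h.disj_petal i hi j hj hij) h1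
      (mem_sdiff.2 ⟨e.1 (mem_sdiff.1 h1).1, (mem_sdiff.1 h1).2⟩)
  · exact ⟨x, mem_insert_self _ _, by simp [h.x_notMem_B i hi, h.x_mem j hj]⟩
  · exact ⟨x, mem_insert_self _ _, by simp [hj, h₀, h.x_mem i hi]⟩
  · exact ⟨x, mem_insert_self _ _, by simp [h.x_notMem_B j hj, h.x_mem i hi]⟩
  · rcases hDone i hi j hj hij with hiD | hjD
    · obtain ⟨c, hc, hci, hcj⟩ := key i hiD j hj hij.symm
      exact ⟨c, hc, by simp [hci, hcj]⟩
    · obtain ⟨c, hc, hcj, hci⟩ := key j hjD i hi hij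
      exact ⟨c, hc, by simp [hci, hcj]⟩

/-! ### The lower bound -/

/-- Petals and remainders have the same union, and the rows of `A` contribute at most `s * (s - 1)`
columns to it. -/
lemma Config.card_B_le {ι V : Type*} [DecidableEq ι] [DecidableEq V] {s : ℕ}
    {W : ι → Finset V} {A B C : Finset ι} {Q : Finset V} {x : V}
    (h : Config s W A B C Q x) (hs : 2 ≤ s) : B.card + 1 ≤ C.card + s := by
  have h1 : (B.biUnion fun i => W i \ Q).card = ∑ i ∈ B, (W i \ Q).card :=
    Finset.card_biUnion fun i hi j hj hij => h.disj_petal i hi j hj hij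
  rw [Finset.sum_congr rfl h.card_petal, sum_const, smul_eq_mul] at h1
  have h2 : (B.biUnion fun i => W i \ Q) ⊆
      (A.biUnion fun j => W j \ insert x Q) ∪ (C.biUnion fun j => W j \ insert x Q) := by
    rw [← Finset.union_biUnion]
    exact Finset.biUnion_subset.2 h.petal_sub
  have h3 : (A.biUnion fun j => W j \ insert x Q).card ≤ A.card * (s - 1) :=
    Finset.card_biUnion_le_card_mul _ _ _ fun j hj => by have := h.card_T_A j hj; omega
  have h4 : (C.biUnion fun j => W j \ insert x Q).card ≤ C.card * s :=
    Finset.card_biUnion_le_card_mul _ _ _ fun j hj => (h.card_T_C j hj).le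
  have h5 := (Finset.card_le_card h2).trans (Finset.card_union_le _ _)
  have h6 : A.card * (s - 1) ≤ s * (s - 1) := Nat.mul_le_mul_right _ h.card_A
  obtain ⟨r, rfl⟩ : ∃ r, s = r + 1 := ⟨s - 1, by omega⟩
  simp only [Nat.add_sub_cancel] at h3 h6
  have h7 : B.card * (r + 1) ≤ (C.card + r) * (r + 1) := by nlinarith
  have := Nat.le_of_mul_le_mul_right h7 (by omega)
  omega

lemma Config.le_card {ι V : Type*} [DecidableEq ι] [DecidableEq V] {s : ℕ}
    {W : ι → Finset V} {A B C : Finset ι} {Q : Finset V} {x : V}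
    (h : Config s W A B C Q x) (hs : 2 ≤ s) (hBC : Disjoint B C)
    (i₀ : ι) (h₀ : W i₀ = ∅) (hi₀ : i₀ ∉ B ∪ C)
    (hBcard : 2 * s ≤ B.card) (K : Finset V)
    (hK : ∀ i j, i ≠ j → ∃ c ∈ K, ¬ (c ∈ W i ↔ c ∈ W j)) :
    B.card + 1 ≤ K.card := by
  by_contra! hlt
  have hK' : ∀ i j, i ≠ j → K ∩ W i ≠ K ∩ W j := by
    intro i j hij e
    obtain ⟨c, hc, hn⟩ := hK i j hij
    have := congrArg (c ∈ ·) e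
    simp [hc] at this
    exact hn this
  simp only [mem_union, not_or] at hi₀
  have hBsplit : ∀ i ∈ B, K ∩ W i = (K ∩ Q) ∪ (K ∩ (W i \ Q)) := by
    intro i hi
    rw [← Finset.inter_union_distrib_left, Finset.union_sdiff_of_subset (h.Q_sub i hi)]
  -- `M` collects the rows of `B` whose petal is missed by `K`.
  set M := B.filter fun i => K ∩ (W i \ Q) = ∅ with hM
  have hM1 : M.card ≤ 1 := by
    rw [Finset.card_le_one]
    intro i hi j hj
    simp only [hM, mem_filter] at hi hj
    by_contra hne
    apply hK' i j hne
    rw [hBsplit i hi.1, hBsplit j hj.1, hi.2, hj.2]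
  have hMQ : M.card ≤ (K ∩ Q).card := by
    rcases M.eq_empty_or_nonempty with h1 | ⟨m, hm⟩
    · simp [h1]
    · refine hM1.trans (Finset.card_pos.2 ?_)
      rw [Finset.nonempty_iff_ne_empty]
      simp only [hM, mem_filter] at hm
      have h1 := hK' m i₀ (fun e => hi₀.1 (e ▸ hm.1))
      rw [hBsplit m hm.1, hm.2, h₀] at h1
      simpa using h1
  set N := B.filter fun i => ¬ K ∩ (W i \ Q) = ∅ with hN
  have hMN : M.card + N.card = B.card := Finset.card_filter_add_card_filter_not _
  have hNone : ∀ i ∈ N, 1 ≤ (K ∩ (W i \ Q)).card := by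
    intro i hi
    exact Finset.card_pos.2 (Finset.nonempty_iff_ne_empty.2 (mem_filter.1 hi).2)
  have hNcard : (N.biUnion fun i => K ∩ (W i \ Q)).card = ∑ i ∈ N, (K ∩ (W i \ Q)).card :=
    Finset.card_biUnion fun i hi j hj hij =>
      (h.disj_petal i (mem_filter.1 hi).1 j (mem_filter.1 hj).1 hij).mono
        inter_subset_right inter_subset_right
  have hNsum : ∑ i ∈ N, 1 ≤ ∑ i ∈ N, (K ∩ (W i \ Q)).card := Finset.sum_le_sum hNone
  have hNsum' : N.card ≤ ∑ i ∈ N, (K ∩ (W i \ Q)).card := by simpa using hNsum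
  have hUcard : ((K ∩ Q) ∪ N.biUnion fun i => K ∩ (W i \ Q)).card =
      (K ∩ Q).card + ∑ i ∈ N, (K ∩ (W i \ Q)).card := by
    rw [← hNcard]
    apply Finset.card_union_of_disjoint
    rw [Finset.disjoint_biUnion_right]
    intro i _
    exact Finset.disjoint_sdiff.mono inter_subset_right inter_subset_right
  have hUsub : (K ∩ Q) ∪ (N.biUnion fun i => K ∩ (W i \ Q)) ⊆ K :=
    Finset.union_subset inter_subset_left (Finset.biUnion_subset.2 fun i _ => inter_subset_left)
  have hUle := Finset.card_le_card hUsub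
  -- The columns found in `Q` and in the petals already number `|B| ≥ |K|`, so they exhaust `K`.
  have hUK := Finset.eq_of_subset_of_card_le hUsub (by omega)
  have hsumeq : ∑ i ∈ N, 1 = ∑ i ∈ N, (K ∩ (W i \ Q)).card := by
    simp only [sum_const, smul_eq_mul, mul_one]
    omega
  have hone : ∀ i ∈ N, 1 = (K ∩ (W i \ Q)).card :=
    (Finset.sum_eq_sum_iff_of_le hNone).1 hsumeq
  have hxK : x ∉ K := by
    rw [← hUK]
    simp only [mem_union, mem_inter, mem_biUnion, mem_sdiff, not_or, not_exists, not_and]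
    exact ⟨fun _ => h.x_notMem, fun i hi _ hx => absurd hx (h.x_notMem_B i (mem_filter.1 hi).1)⟩
  -- The row `r` is the zero row if all petals are hit, and otherwise the row whose petal is missed.
  obtain ⟨r, hrC, hr⟩ : ∃ r, r ∉ C ∧ K ∩ W r = K ∩ Q := by
    rcases M.eq_empty_or_nonempty with h1 | ⟨m, hm⟩
    · refine ⟨i₀, hi₀.2, ?_⟩
      have h2 : (K ∩ Q).card = 0 := by
        rw [h1, card_empty] at hMN
        omega
      rw [Finset.card_eq_zero] at h2
      rw [h2, h₀, inter_empty]
    · simp only [hM, mem_filter] at hm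
      exact ⟨m, Finset.disjoint_left.1 hBC hm.1, by rw [hBsplit m hm.1, hm.2, union_empty]⟩
  have hCsplit : ∀ j ∈ C, K ∩ W j = (K ∩ Q) ∪ (K ∩ (W j \ insert x Q)) := by
    intro j hj
    ext p
    have h1 := @h.Q_sub_C j hj p
    have h2 : p ∈ K → p ≠ x := fun hp e => hxK (e ▸ hp)
    simp only [mem_inter, mem_union, mem_sdiff, mem_insert]
    tauto
  -- A remainder missed by `K` makes `j` agree with `r` on `K`; one hit only at `p` makes `j` agree
  -- with the row of `B` whose petal contains `p`.
  have htwo : ∀ j ∈ C, 2 ≤ (K ∩ (W j \ insert x Q)).card := by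
    intro j hj
    by_contra! hlt2
    rcases Nat.lt_or_ge (K ∩ (W j \ insert x Q)).card 1 with h1 | h1
    · have h2 : K ∩ (W j \ insert x Q) = ∅ := Finset.card_eq_zero.1 (by omega)
      apply hK' r j (fun e => hrC (e ▸ hj))
      rw [hr, hCsplit j hj, h2, union_empty]
    · obtain ⟨p, hp⟩ := Finset.card_eq_one.1 (show (K ∩ (W j \ insert x Q)).card = 1 by omega)
      have hp' : p ∈ K ∩ (W j \ insert x Q) := by simp [hp]
      rw [mem_inter] at hp'
      obtain ⟨i, hi, hpi⟩ := mem_biUnion.1 (h.T_sub j (mem_union_right _ hj) hp'.2)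
      have hpi' : p ∈ K ∩ (W i \ Q) := mem_inter.2 ⟨hp'.1, hpi⟩
      have hiN : i ∈ N := mem_filter.2 ⟨hi, Finset.ne_empty_of_mem hpi'⟩
      obtain ⟨p', hp''⟩ := Finset.card_eq_one.1 (hone i hiN).symm
      have hpp : p = p' := by simpa [hp''] using hpi'
      apply hK' i j (fun e => Finset.disjoint_left.1 hBC hi (e ▸ hj))
      rw [hBsplit i hi, hCsplit j hj, hp, hp'', hpp]
  have hCle : C.card * 2 ≤ K.card := by
    have h1 : (C.biUnion fun j => K ∩ (W j \ insert x Q)).card =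
        ∑ j ∈ C, (K ∩ (W j \ insert x Q)).card :=
      Finset.card_biUnion fun i hi j hj hij =>
        (h.disj_T i (mem_union_right _ hi) j (mem_union_right _ hj) hij).mono
          inter_subset_right inter_subset_right
    have h2 : (C.biUnion fun j => K ∩ (W j \ insert x Q)).card ≤ K.card :=
      Finset.card_le_card (Finset.biUnion_subset.2 fun j _ => inter_subset_left)
    have h3 := Finset.card_nsmul_le_sum C _ 2 htwo
    rw [smul_eq_mul] at h3
    omega
  have := h.card_B_le hs
  omega

/-! ### Back to the matrix -/

lemma hammingDist_add_two_mul_card_inter {n d : ℕ} (S : Fin n → Fin d → Bool) (i j : Fin n) :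
    hammingDist (S i) (S j) + 2 * (rowSupport S i ∩ rowSupport S j).card =
      (rowSupport S i).card + (rowSupport S j).card := by
  have h1 : hammingDist (S i) (S j) =
      (rowSupport S i \ rowSupport S j).card + (rowSupport S j \ rowSupport S i).card := by
    rw [← Finset.card_union_of_disjoint disjoint_sdiff_sdiff]
    unfold hammingDist
    congr 1
    ext c
    simp only [rowSupport, mem_filter, mem_univ, true_and, mem_union, mem_sdiff]
    cases S i c <;> cases S j c <;> simp
  have h2 := Finset.card_sdiff_add_card_inter (rowSupport S i) (rowSupport S j)
  have h3 := Finset.card_sdiff_add_card_inter (rowSupport S j) (rowSupport S i)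
  rw [inter_comm] at h3
  omega

/-- A column with a single `1` would be inessential, since deleting one column keeps rows at distance
at least `2` distinct. -/
lemma exists_other_row {n d : ℕ} (S : Fin n → Fin d → Bool)
    (hiness : ∀ j : Fin d, ¬ Inessential S j)
    (hdist : ∀ i j : Fin n, i ≠ j → 2 ≤ hammingDist (S i) (S j))
    (i : Fin n) (p : Fin d) (hp : p ∈ rowSupport S i) :
    ∃ j, j ≠ i ∧ p ∈ rowSupport S j := by
  simp only [rowSupport, mem_filter, mem_univ, true_and] at hp ⊢
  by_contra! hno
  refine hiness p ⟨⟨i, fun l hl => ?_, fun l l' hl hl' => ?_⟩, fun a b hab => ?_⟩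
  · rw [hp]; exact (hno l hl).symm
  · rw [Bool.eq_false_of_not_eq_true (hno l hl), Bool.eq_false_of_not_eq_true (hno l' hl')]
  · obtain ⟨c, hc, hcp⟩ := Finset.exists_mem_ne (hdist a b hab) p
    exact ⟨c, hcp, (mem_filter.1 hc).2⟩

theorem stmt12 {n d : ℕ} (α : ℕ) (hα : 3 ≤ α) (hodd : Odd α)
    (S : Fin n → Fin d → Bool)
    (hrows : ∀ i j : Fin n, i ≠ j → S i ≠ S j)
    (i₀ : Fin n) (hzero : ∀ c, S i₀ c = false)
    (hcols : ∀ c c' : Fin d, c ≠ c' → ∃ i : Fin n, S i c ≠ S i c')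
    (hiness : ∀ j : Fin d, ¬ Inessential S j)
    (hham : ∀ i j : Fin n, i ≠ j →
      hammingDist (S i) (S j) = α ∨ hammingDist (S i) (S j) = α + 1 ∨
        hammingDist (S i) (S j) = α + 2)
    (hnα : (Finset.univ.filter fun i : Fin n => (rowSupport S i).card = α).card <
      (α + 2) ^ 2 - (α + 2) + 2)
    (hnα1 : (α + 2) ^ 2 - (α + 2) + 2 ≤
      (Finset.univ.filter fun i : Fin n => (rowSupport S i).card = α + 1).card)
    (hnα2 : (α + 2) ^ 2 - (α + 2) + 2 ≤
      (Finset.univ.filter fun i : Fin n => (rowSupport S i).card = α + 2).card) :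
    (∃ K : Finset (Fin d),
        K.card = (Finset.univ.filter fun i : Fin n => (rowSupport S i).card = α + 1).card + 1 ∧
        Distinguishes S K) ∧
    (∀ K : Finset (Fin d), Distinguishes S K →
      (Finset.univ.filter fun i : Fin n => (rowSupport S i).card = α + 1).card + 1 ≤
        K.card) := by
  obtain ⟨m, hm⟩ := hodd
  obtain ⟨s, hs, rfl⟩ : ∃ s, 2 ≤ s ∧ α = 2 * s - 1 := ⟨m + 1, by omega, by omega⟩
  have hc : (2 * s - 1 + 2) ^ 2 - (2 * s - 1 + 2) + 2 = 4 * s ^ 2 + 2 * s + 2 := by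
    have h1 : 2 * s - 1 + 2 = 2 * s + 1 := by omega
    rw [h1]
    have h2 : (2 * s + 1) ^ 2 = 4 * s ^ 2 + 2 * s + (2 * s + 1) := by ring
    omega
  rw [hc] at hnα1 hnα2
  set W := rowSupport S with hW
  set A := univ.filter fun i : Fin n => (W i).card = 2 * s - 1 with hA
  set B := univ.filter fun i : Fin n => (W i).card = 2 * s - 1 + 1 with hB
  set C := univ.filter fun i : Fin n => (W i).card = 2 * s - 1 + 2 with hC
  have h₀ : W i₀ = ∅ := by
    simp [hW, rowSupport, hzero]
  have hinter := hammingDist_add_two_mul_card_inter S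
  rw [← hW] at hinter
  have hcov : ∀ i, i = i₀ ∨ i ∈ A ∨ i ∈ B ∨ i ∈ C := by
    intro i
    by_cases hi : i = i₀
    · exact Or.inl hi
    · right
      have h1 := hinter i i₀
      have h2 := hham i i₀ hi
      simp only [h₀, inter_empty, card_empty] at h1
      simp only [hA, hB, hC, mem_filter, mem_univ, true_and]
      omega
  have hwA : ∀ i ∈ A, (W i).card + 1 = 2 * s := by
    intro i hi
    have := (mem_filter.1 hi).2
    omega
  have hwB : ∀ i ∈ B, (W i).card = 2 * s := by
    intro i hi
    have := (mem_filter.1 hi).2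
    omega
  have hwC : ∀ i ∈ C, (W i).card = 2 * s + 1 := by
    intro i hi
    have := (mem_filter.1 hi).2
    omega
  have hpair : ∀ i j, (W i).card ≠ (W j).card → i ≠ j := fun i j h e => h (e ▸ rfl)
  obtain ⟨Q, x, hcfg⟩ := exists_config s hs W A B C i₀ h₀ hcov
    (exists_other_row S hiness fun i j hij => by have := hham i j hij; omega) hwA hwB hwC
    (fun i hi j hj hij => by
      have := hinter i j; have := hham i j hij; have := hwA i hi; have := hwA j hj; omega)
    (fun i hi j hj hij => by
      have := hinter i j; have := hham i j hij; have := hwB i hi; have := hwB j hj; omega)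
    (fun i hi j hj hij => by
      have := hinter i j; have := hham i j hij; have := hwC i hi; have := hwC j hj; omega)
    (fun i hi j hj => by
      have := hwA i hi; have := hwB j hj
      have := hinter i j; have := hham i j (hpair i j (by omega)); omega)
    (fun i hi j hj => by
      have := hwA i hi; have := hwC j hj
      have := hinter i j; have := hham i j (hpair i j (by omega)); omega)
    (fun i hi j hj => by
      have := hwB i hi; have := hwC j hj
      have := hinter i j; have := hham i j (hpair i j (by omega)); omega)
    hnα1 hnα2
  have hmem : ∀ i j c, S i c ≠ S j c ↔ ¬ (c ∈ W i ↔ c ∈ W j) := by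
    intro i j c
    simp only [hW, rowSupport, mem_filter, mem_univ, true_and]
    cases S i c <;> cases S j c <;> simp
  constructor
  · obtain ⟨K, hK, hKd⟩ := hcfg.exists_distinguishing hs i₀ h₀ hcov
    refine ⟨K, hK, fun i j hij => ?_⟩
    obtain ⟨c, hcK, hcd⟩ := hKd i j hij
    exact ⟨c, hcK, (hmem i j c).2 hcd⟩
  · intro K hK
    refine hcfg.le_card hs ?_ i₀ h₀ ?_ (by nlinarith) K fun i j hij => ?_
    · rw [Finset.disjoint_left]
      intro i hi hi'
      have := hwB i hi
      have := hwC i hi'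
      omega
    · intro h
      rcases mem_union.1 h with h | h
      · have := hwB i₀ h
        rw [h₀, card_empty] at this
        omega
      · have := hwC i₀ h
        rw [h₀, card_empty] at this
        omega
    · obtain ⟨c, hcK, hcd⟩ := hK i j hij
      exact ⟨c, hcK, (hmem i j c).1 hcd⟩
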